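/- arXiv:1608.06728 — 4 statements merged into one kernel-verified Lean document; each statement's English description precedes it below -/
import Mathlib

section
/- There exists a constant C > 0, depending only on ψ, such that for every dyadic interval I ⊆ [0,1), ∫_{x=0}^{1} ∫_{y=0}^{∞} |G_I(x+iy)|² (1-e^{-4πy}) e^{-2πy} dy dx ≤ C |I|. (Equivalently, ∫_𝔻 |g_I(w)|² (1-|w|²) dA(w) ≤ C' |I|, where g_I is the harmonic extension to 𝔻 of the periodization of f_I.) -/
open MeasureTheory Complex Real
open scoped FourierTransform

noncomputable section

/-- The length `|I| = 2^{-j}` of a dyadic interval of generation `j`. -/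
def len (j : ℤ) : ℝ := (2 : ℝ) ^ (-j)

/-- The center `C_I = 2^{-j}(k + 1/2)` of the dyadic interval `I = [2^{-j}k, 2^{-j}(k+1))`. -/
def ctr (j k : ℤ) : ℝ := (2 : ℝ) ^ (-j) * ((k : ℝ) + 1 / 2)

/-- `ψ_I(x) = |I|^{-1/2} ψ((x - C_I)/|I|)`. -/
def psiI (ψ : SchwartzMap ℝ ℂ) (j k : ℤ) (x : ℝ) : ℂ :=
  (((Real.sqrt (len j))⁻¹ : ℝ) : ℂ) * ψ ((x - ctr j k) / len j)

/-- The Poisson extension to the upper half-plane of `f_I = |I|^{1/2} D ψ_I`, where `D` is the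
Fourier multiplier with symbol `4π|ξ|`:
`F_I(x+iy) = ∫ 4π|ξ| |I|^{1/2} ψ̂_I(ξ) e^{-2π|ξ|y} e^{2πixξ} dξ`. -/
def FI (ψ : SchwartzMap ℝ ℂ) (j k : ℤ) (x y : ℝ) : ℂ :=
  ∫ ξ : ℝ, ((4 * π * |ξ| * Real.sqrt (len j) * Real.exp (-(2 * π * |ξ| * y)) : ℝ) : ℂ) *
    𝓕 (psiI ψ j k) ξ * Complex.exp (2 * (π : ℂ) * Complex.I * (x : ℂ) * (ξ : ℂ))

/-- The periodization `G_I(x+iy) = Σ_{k∈ℤ} F_I(x-k+iy)`. -/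
def GI (ψ : SchwartzMap ℝ ℂ) (j k : ℤ) (x y : ℝ) : ℂ :=
  ∑' m : ℤ, FI ψ j k (x - (m : ℝ)) y



/-- The symbol whose values at integers are the Fourier coefficients of `G_I`. -/
def hh (ψ : SchwartzMap ℝ ℂ) (L c y ξ : ℝ) : ℂ :=
  ((4 * π * |ξ| * L * Real.exp (-(2 * π * |ξ| * y)) : ℝ) : ℂ) * 𝓕 (⇑ψ) (L * ξ) *
    Complex.exp (((-2 * π * c * ξ : ℝ) : ℂ) * Complex.I)

lemma len_pos (j : ℤ) : 0 < len j := by unfold len; positivity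

lemma fourier_psiI (ψ : SchwartzMap ℝ ℂ) (j k : ℤ) (ξ : ℝ) :
    𝓕 (psiI ψ j k) ξ = ((Real.sqrt (len j) : ℝ) : ℂ) * 𝓕 (⇑ψ) (len j * ξ) *
      Complex.exp (((-2 * π * ctr j k * ξ : ℝ) : ℂ) * Complex.I) := by
  have hL := len_pos j
  set L := len j with hLd
  set c := ctr j k with hc
  rw [Real.fourier_real_eq_integral_exp_smul, Real.fourier_real_eq_integral_exp_smul]
  have h1 : ∀ v : ℝ, cexp (((-2 * π * v * ξ : ℝ) : ℂ) * Complex.I) • psiI ψ j k v =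
      (fun u : ℝ => (fun t : ℝ => (((Real.sqrt L)⁻¹ : ℝ) : ℂ) *
        cexp (((-2 * π * c * ξ : ℝ) : ℂ) * Complex.I) *
        (cexp (((-2 * π * t * (L * ξ) : ℝ) : ℂ) * Complex.I) • ψ t)) (u / L)) (v - c) := by
    intro v
    have : cexp (((-2 * π * v * ξ : ℝ) : ℂ) * Complex.I) =
        cexp (((-2 * π * c * ξ : ℝ) : ℂ) * Complex.I) *
        cexp (((-2 * π * ((v - c) / L) * (L * ξ) : ℝ) : ℂ) * Complex.I) := by
      rw [← Complex.exp_add, ← add_mul, ← Complex.ofReal_add]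
      congr 3
      field_simp
      ring
    simp only [psiI, smul_eq_mul]
    rw [this]
    ring
  simp_rw [h1]
  rw [integral_sub_right_eq_self (fun u : ℝ => (fun t : ℝ => (((Real.sqrt L)⁻¹ : ℝ) : ℂ) *
        cexp (((-2 * π * c * ξ : ℝ) : ℂ) * Complex.I) *
        (cexp (((-2 * π * t * (L * ξ) : ℝ) : ℂ) * Complex.I) • ψ t)) (u / L)),
    Measure.integral_comp_div (fun t : ℝ => (((Real.sqrt L)⁻¹ : ℝ) : ℂ) *
        cexp (((-2 * π * c * ξ : ℝ) : ℂ) * Complex.I) *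
        (cexp (((-2 * π * t * (L * ξ) : ℝ) : ℂ) * Complex.I) • ψ t)) L, abs_of_pos hL, integral_const_mul]
  have h2 : ((L : ℝ) : ℂ) * (((Real.sqrt L)⁻¹ : ℝ) : ℂ) = ((Real.sqrt L : ℝ) : ℂ) := by
    rw [← Complex.ofReal_mul]
    congr 1
    have := Real.mul_self_sqrt hL.le
    have h3 := Real.sqrt_pos.2 hL
    field_simp
    nlinarith
  rw [Complex.real_smul, ← h2]
  ring

lemma FI_eq (ψ : SchwartzMap ℝ ℂ) (j k : ℤ) (x y : ℝ) :
    FI ψ j k x y = 𝓕⁻ (hh ψ (len j) (ctr j k) y) x := by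
  unfold FI
  rw [Real.fourierInv_eq']
  congr 1
  ext ξ
  rw [fourier_psiI]
  have h2 : ((len j : ℝ) : ℂ) = ((Real.sqrt (len j) : ℝ) : ℂ) * ((Real.sqrt (len j) : ℝ) : ℂ) := by
    rw [← Complex.ofReal_mul, Real.mul_self_sqrt (len_pos j).le]
  have h3 : cexp (((2 * π * inner ℝ ξ x : ℝ) : ℂ) * Complex.I) =
      Complex.exp (2 * (π : ℂ) * Complex.I * (x : ℂ) * (ξ : ℂ)) := by
    congr 1
    simp
    ring
  rw [h3]
  simp only [hh, smul_eq_mul, Complex.ofReal_mul]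
  rw [h2]
  ring

lemma psihat_zero (ψ : SchwartzMap ℝ ℂ)
    (hsupp : Function.support (𝓕 ⇑ψ) ⊆
      Set.Icc (-(4 / 3) : ℝ) (-(1 / 3)) ∪ Set.Icc (1 / 3) (4 / 3))
    (ξ : ℝ) (h : |ξ| < 1 / 3 ∨ 4 / 3 < |ξ|) : 𝓕 (⇑ψ) ξ = 0 := by
  by_contra hne
  have := hsupp hne
  simp only [Set.mem_union, Set.mem_Icc] at this
  rcases this with ⟨h1, h2⟩ | ⟨h1, h2⟩
  · rw [abs_of_nonpos (by linarith)] at h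
    rcases h with h | h <;> linarith
  · rw [abs_of_nonneg (by linarith)] at h
    rcases h with h | h <;> linarith

lemma hh_zero (ψ : SchwartzMap ℝ ℂ)
    (hsupp : Function.support (𝓕 ⇑ψ) ⊆
      Set.Icc (-(4 / 3) : ℝ) (-(1 / 3)) ∪ Set.Icc (1 / 3) (4 / 3))
    (L : ℝ) (hL : 0 < L) (c y : ℝ) (ξ : ℝ) (h : L * |ξ| < 1 / 3 ∨ 4 / 3 < L * |ξ|) : hh ψ L c y ξ = 0 := by
  unfold hh
  rw [psihat_zero ψ hsupp, mul_zero, zero_mul]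
  rwa [abs_mul, abs_of_pos hL]

lemma hh_compact (ψ : SchwartzMap ℝ ℂ)
    (hsupp : Function.support (𝓕 ⇑ψ) ⊆
      Set.Icc (-(4 / 3) : ℝ) (-(1 / 3)) ∪ Set.Icc (1 / 3) (4 / 3))
    (L : ℝ) (hL : 0 < L) (c y : ℝ) : HasCompactSupport (hh ψ L c y) := by
  apply HasCompactSupport.intro (isCompact_Icc (a := -(4 / 3 / L)) (b := 4 / 3 / L))
  intro ξ hξ
  apply hh_zero ψ hsupp L hL
  right
  by_contra hcon
  push Not at hcon
  apply hξ
  have : |ξ| ≤ 4 / 3 / L := by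
    rw [le_div_iff₀ hL]; linarith
  exact abs_le.1 this

lemma hh_smooth (ψ : SchwartzMap ℝ ℂ)
    (hsupp : Function.support (𝓕 ⇑ψ) ⊆
      Set.Icc (-(4 / 3) : ℝ) (-(1 / 3)) ∪ Set.Icc (1 / 3) (4 / 3))
    (L : ℝ) (hL : 0 < L) (c y : ℝ) : ContDiff ℝ (⊤ : ℕ∞) (hh ψ L c y) := by
  rw [contDiff_iff_contDiffAt]
  intro ξ
  by_cases h0 : ξ = 0
  · subst h0
    have : hh ψ L c y =ᶠ[nhds 0] fun _ => 0 := by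
      have : ∀ᶠ ξ in nhds (0 : ℝ), L * |ξ| < 1 / 3 := by
        apply (show Continuous fun ξ : ℝ => L * |ξ| by fun_prop).continuousAt.eventually_lt_const
        simp
      filter_upwards [this] with ξ hξ
      exact hh_zero ψ hsupp L hL c y ξ (Or.inl hξ)
    exact contDiffAt_const.congr_of_eventuallyEq this
  · have habs : ContDiffAt ℝ (⊤ : ℕ∞) (fun ξ : ℝ => |ξ|) ξ := contDiffAt_abs h0
    have h1 : ContDiffAt ℝ (⊤ : ℕ∞) (fun ξ : ℝ => 𝓕 (⇑ψ) (L * ξ)) ξ := by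
      have := (𝓕 ψ).smooth (⊤ : ℕ∞)
      rw [SchwartzMap.fourier_coe] at this
      exact (this.comp (contDiff_const.mul contDiff_id)).contDiffAt
    unfold hh
    refine (ContDiffAt.mul ?_ h1).mul ?_
    · refine Complex.ofRealCLM.contDiff.contDiffAt.comp ξ ?_
      exact ((contDiffAt_const.mul habs).mul contDiffAt_const).mul
        (((contDiffAt_const.mul habs).mul contDiffAt_const).neg.exp)
    · refine ContDiffAt.cexp (ContDiffAt.mul ?_ contDiffAt_const)
      refine Complex.ofRealCLM.contDiff.contDiffAt.comp ξ ?_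
      exact contDiffAt_const.mul contDiffAt_id

lemma hh_bound (ψ : SchwartzMap ℝ ℂ)
    (hsupp : Function.support (𝓕 ⇑ψ) ⊆
      Set.Icc (-(4 / 3) : ℝ) (-(1 / 3)) ∪ Set.Icc (1 / 3) (4 / 3))
    (L : ℝ) (hL : 0 < L) (c y : ℝ) (M : ℝ) (hM : ∀ ξ, ‖𝓕 (⇑ψ) ξ‖ ≤ M) (hy : 0 ≤ y) (ξ : ℝ) :
    ‖hh ψ L c y ξ‖ ≤ (4 * π * (4 / 3) * M) * Real.exp (-(2 * π * y / (3 * L))) := by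
  have hM0 : 0 ≤ M := (norm_nonneg _).trans (hM 0)
  by_cases h : L * |ξ| < 1 / 3 ∨ 4 / 3 < L * |ξ|
  · rw [hh_zero ψ hsupp L hL c y ξ h, norm_zero]
    positivity
  push Not at h
  obtain ⟨h1, h2⟩ := h
  unfold hh
  rw [norm_mul, norm_mul, Complex.norm_exp_ofReal_mul_I, mul_one, Complex.norm_real,
    Real.norm_of_nonneg (by positivity)]
  have e1 : Real.exp (-(2 * π * |ξ| * y)) ≤ Real.exp (-(2 * π * y / (3 * L))) := by
    apply Real.exp_le_exp.2
    apply neg_le_neg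
    rw [div_le_iff₀ (by positivity)]
    have : 0 ≤ 2 * π * y := by positivity
    nlinarith
  calc 4 * π * |ξ| * L * Real.exp (-(2 * π * |ξ| * y)) * ‖𝓕 (⇑ψ) (L * ξ)‖
      = 4 * π * (L * |ξ|) * Real.exp (-(2 * π * |ξ| * y)) * ‖𝓕 (⇑ψ) (L * ξ)‖ := by ring
    _ ≤ 4 * π * (4 / 3) * Real.exp (-(2 * π * y / (3 * L))) * M := by
        gcongr
        exact hM _
    _ = _ := by ring

lemma GI_eq (ψ : SchwartzMap ℝ ℂ)
    (hsupp : Function.support (𝓕 ⇑ψ) ⊆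
      Set.Icc (-(4 / 3) : ℝ) (-(1 / 3)) ∪ Set.Icc (1 / 3) (4 / 3))
    (j : ℕ) (k : ℤ) (x y : ℝ) :
    GI ψ j k x y = ∑ n ∈ Finset.Icc (-(2 * 2 ^ j) : ℤ) (2 * 2 ^ j),
      hh ψ (len j) (ctr j k) y n * Complex.exp (2 * π * Complex.I * n * x) := by
  have hL := len_pos j
  let H : SchwartzMap ℝ ℂ := (hh_compact ψ hsupp (len j) hL (ctr j k) y).toSchwartzMap
    (hh_smooth ψ hsupp (len j) hL (ctr j k) y)
  have hH : (⇑H) = hh ψ (len j) (ctr j k) y := rfl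
  have hP := SchwartzMap.tsum_eq_tsum_fourier (𝓕⁻ H) x
  rw [FourierTransform.fourier_fourierInv_eq, SchwartzMap.fourierInv_coe, hH] at hP
  unfold GI
  simp_rw [FI_eq]
  rw [← (Equiv.neg ℤ).tsum_eq]
  simp only [Equiv.neg_apply, Int.cast_neg, sub_neg_eq_add]
  rw [hP, tsum_eq_sum]
  · apply Finset.sum_congr rfl
    intro n _
    rw [fourier_coe_apply]
    simp
  · intro n hn
    rw [hh_zero ψ hsupp (len j) hL, zero_mul]
    right
    have hn' : (2 * 2 ^ j : ℤ) < |n| := by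
      by_contra hcon
      push Not at hcon
      exact hn (Finset.mem_Icc.2 (abs_le.1 hcon))
    have hn2 : (2 * 2 ^ j : ℝ) < |(n : ℝ)| := by exact_mod_cast hn'
    have : len j * 2 ^ j = 1 := by
      simp [len]
    nlinarith

lemma int_exp (n : ℤ) : (∫ x in Set.Ico (0 : ℝ) 1, Complex.exp (2 * π * Complex.I * n * x)) =
    if n = 0 then 1 else 0 := by
  rw [integral_Ico_eq_integral_Ioc, ← intervalIntegral.integral_of_le zero_le_one]
  split_ifs with h
  · simp [h]
  · rw [integral_exp_mul_complex]
    · have := Complex.exp_int_mul_two_pi_mul_I n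
      have h2 : (2 * π * Complex.I * n * ((1 : ℝ) : ℂ)) = n * (2 * π * Complex.I) := by
        push_cast; ring
      rw [h2, this]
      simp
    · simp [h, Real.pi_ne_zero]

lemma parseval (S : Finset ℤ) (a : ℤ → ℂ) :
    (∫ x in Set.Ico (0 : ℝ) 1, ‖∑ n ∈ S, a n * Complex.exp (2 * π * Complex.I * n * x)‖ ^ 2) =
      ∑ n ∈ S, ‖a n‖ ^ 2 := by
  apply Complex.ofReal_injective
  rw [← integral_complex_ofReal]
  have h1 : ∀ x : ℝ,
      ((‖∑ n ∈ S, a n * Complex.exp (2 * π * Complex.I * n * x)‖ ^ 2 : ℝ) : ℂ) =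
      ∑ n ∈ S, ∑ m ∈ S, (a n * (starRingEnd ℂ) (a m)) *
        Complex.exp (2 * π * Complex.I * ((n - m : ℤ) : ℂ) * x) := by
    intro x
    push_cast
    rw [← Complex.mul_conj', map_sum, Finset.sum_mul_sum]
    refine Finset.sum_congr rfl fun n _ => Finset.sum_congr rfl fun m _ => ?_
    rw [map_mul, ← Complex.exp_conj]
    have : Complex.exp (2 * π * Complex.I * (n - m) * x) =
        Complex.exp (2 * π * Complex.I * n * x) *
        Complex.exp ((starRingEnd ℂ) (2 * π * Complex.I * m * x)) := by
      rw [← Complex.exp_add]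
      congr 1
      have h2 : (starRingEnd ℂ) 2 = 2 := Complex.conj_ofNat 2
      simp [h2]
      ring
    rw [this]
    ring
  have hint : ∀ n m : ℤ, IntegrableOn (fun x : ℝ => (a n * (starRingEnd ℂ) (a m)) *
        Complex.exp (2 * π * Complex.I * ((n - m : ℤ) : ℂ) * x)) (Set.Ico 0 1) := by
    intro n m
    apply Continuous.integrableOn_Icc (a := (0 : ℝ)) (b := 1) (by fun_prop) |>.mono_set
    exact Set.Ico_subset_Icc_self
  simp_rw [h1]
  rw [integral_finsetSum _ fun n _ => integrable_finsetSum _ fun m _ => hint n m]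
  simp_rw [integral_finsetSum S fun m _ => hint _ m, integral_const_mul, int_exp, sub_eq_zero]
  push_cast
  refine Finset.sum_congr rfl fun n hn => ?_
  simp [hn, Complex.mul_conj']

lemma int_y (r : ℝ) (hr : 0 < r) :
    IntegrableOn (fun y : ℝ => y * Real.exp (-(r * y))) (Set.Ioi 0) ∧
    (∫ y in Set.Ioi (0 : ℝ), y * Real.exp (-(r * y))) = (1 / r) ^ 2 := by
  have h := Real.integral_rpow_mul_exp_neg_mul_Ioi (a := 2) (r := r) (by norm_num) hr
  have e : (2 : ℝ) - 1 = 1 := by norm_num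
  rw [Real.Gamma_two, e, Real.rpow_two, mul_one] at h
  simp only [Real.rpow_one] at h
  refine ⟨Integrable.of_integral_ne_zero ?_, h⟩
  rw [h]
  positivity

/-- There is a constant `C > 0`, depending only on `ψ`, such that for every dyadic interval
`I = [2^{-j}k, 2^{-j}(k+1)) ⊆ [0,1)`,
`∫_{x=0}^{1} ∫_{y=0}^{∞} |G_I(x+iy)|² (1-e^{-4πy}) e^{-2πy} dy dx ≤ C |I|`. -/
theorem stmt_5 (ψ : SchwartzMap ℝ ℂ)
    (hsupp : Function.support (𝓕 ⇑ψ) ⊆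
      Set.Icc (-(4 / 3) : ℝ) (-(1 / 3)) ∪ Set.Icc (1 / 3) (4 / 3))
    (horth : ∀ j k j' k' : ℤ,
      (∫ x : ℝ, psiI ψ j k x * (starRingEnd ℂ) (psiI ψ j' k' x)) =
        if j = j' ∧ k = k' then 1 else 0) :
    ∃ C : ℝ, 0 < C ∧ ∀ j k : ℕ, k < 2 ^ j →
      (∫ x in Set.Ico (0 : ℝ) 1, ∫ y in Set.Ioi (0 : ℝ),
          ‖GI ψ (j : ℤ) (k : ℤ) x y‖ ^ 2 * (1 - Real.exp (-(4 * π * y))) *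
            Real.exp (-(2 * π * y)))
        ≤ C * len (j : ℤ) := by
  obtain ⟨M, hM⟩ : ∃ M : ℝ, ∀ ξ, ‖𝓕 (⇑ψ) ξ‖ ≤ M := by
    obtain ⟨M, -, hM⟩ := (𝓕 ψ).decay 0 0
    refine ⟨M, fun ξ => ?_⟩
    have := hM ξ
    simpa [SchwartzMap.fourier_coe] using this
  set B : ℝ := 4 * π * (4 / 3) * M with hB
  refine ⟨5 * B ^ 2 * (4 * π) * (3 / (4 * π)) ^ 2 + 1, by positivity, ?_⟩
  intro j k _
  have hL := len_pos j
  set L := len j with hLd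
  set c := ctr j k with hcd
  set S := Finset.Icc (-(2 * 2 ^ j) : ℤ) (2 * 2 ^ j) with hS
  have hLN : L * 2 ^ j = 1 := by
    simp [hLd, len]
  have hcard : (S.card : ℝ) ≤ 5 / L := by
    have h1 : (S.card : ℤ) = 4 * 2 ^ j + 1 := by
      rw [hS, Int.card_Icc, Int.toNat_of_nonneg]
      · ring
      · have : (0 : ℤ) < 2 ^ j := by positivity
        linarith
    have h2 : (S.card : ℝ) = 4 * 2 ^ j + 1 := by exact_mod_cast h1
    have h3 : (1 : ℝ) ≤ 2 ^ j := one_le_pow₀ (by norm_num)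
    rw [h2, le_div_iff₀ hL]
    nlinarith
  simp_rw [GI_eq ψ hsupp]
  rw [← hLd, ← hcd, ← hS]
  have hexp1 : ∀ y : ℝ, 0 < y → 0 ≤ 1 - Real.exp (-(4 * π * y)) := by
    intro y hy
    have : Real.exp (-(4 * π * y)) ≤ 1 := Real.exp_le_one_iff.2 (by
      have : 0 < 4 * π * y := by positivity
      linarith)
    linarith
  rw [integral_integral_swap]
  · have hr : 0 < 4 * π / (3 * L) := by positivity
    obtain ⟨hi, he⟩ := int_y (4 * π / (3 * L)) hr
    have step : (∫ y in Set.Ioi (0 : ℝ), ∫ x in Set.Ico (0 : ℝ) 1,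
        ‖∑ n ∈ S, hh ψ L c y n * Complex.exp (2 * π * Complex.I * n * x)‖ ^ 2 *
          (1 - Real.exp (-(4 * π * y))) * Real.exp (-(2 * π * y))) ≤
        ∫ y in Set.Ioi (0 : ℝ), (5 / L * B ^ 2 * (4 * π)) *
          (y * Real.exp (-(4 * π / (3 * L) * y))) := by
      apply integral_mono_of_nonneg
      · refine (ae_restrict_mem measurableSet_Ioi).mono fun y hy => ?_
        refine integral_nonneg fun x => ?_
        have := hexp1 y hy
        positivity
      · exact hi.const_mul _
      · refine (ae_restrict_mem measurableSet_Ioi).mono fun y hy => ?_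
        have hy' : 0 < y := hy
        have h0 := hexp1 y hy
        simp only
        rw [integral_mul_const, integral_mul_const, parseval]
        have hs : ∑ n ∈ S, ‖hh ψ L c y n‖ ^ 2 ≤
            5 / L * (B ^ 2 * Real.exp (-(4 * π / (3 * L) * y))) := by
          calc ∑ n ∈ S, ‖hh ψ L c y n‖ ^ 2
              ≤ ∑ n ∈ S, (B ^ 2 * Real.exp (-(4 * π / (3 * L) * y))) := by
                apply Finset.sum_le_sum
                intro n _
                have := hh_bound ψ hsupp L hL c y M hM hy'.le n
                calc ‖hh ψ L c y n‖ ^ 2 ≤ (B * Real.exp (-(2 * π * y / (3 * L)))) ^ 2 := by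
                      gcongr
                  _ = _ := by
                      rw [mul_pow, ← Real.exp_nat_mul]
                      congr 2
                      push_cast
                      ring
            _ = S.card * (B ^ 2 * Real.exp (-(4 * π / (3 * L) * y))) := by simp
            _ ≤ _ := by gcongr
        have hw : 1 - Real.exp (-(4 * π * y)) ≤ 4 * π * y := by
          have := Real.add_one_le_exp (-(4 * π * y))
          linarith
        have he2 : Real.exp (-(2 * π * y)) ≤ 1 := Real.exp_le_one_iff.2 (by
          have : 0 < 2 * π * y := by positivity
          linarith)
        calc (∑ n ∈ S, ‖hh ψ L c y n‖ ^ 2) * (1 - Real.exp (-(4 * π * y))) *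
              Real.exp (-(2 * π * y))
            ≤ (5 / L * (B ^ 2 * Real.exp (-(4 * π / (3 * L) * y)))) * (4 * π * y) * 1 := by
              gcongr
          _ = _ := by ring
    refine step.trans ?_
    rw [integral_const_mul, he]
    have : 5 / L * B ^ 2 * (4 * π) * (1 / (4 * π / (3 * L))) ^ 2 =
        5 * B ^ 2 * (4 * π) * (3 / (4 * π)) ^ 2 * L := by
      field_simp
    rw [this]
    nlinarith
  · rw [Measure.prod_restrict]
    have hg : Integrable (fun z : ℝ × ℝ => (S.card * B) ^ 2 * Real.exp (-(2 * π) * z.2))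
        ((volume.restrict (Set.Ico (0 : ℝ) 1)).prod (volume.restrict (Set.Ioi (0 : ℝ)))) := by
      refine Integrable.mul_prod (f := fun _ : ℝ => ((S.card * B) ^ 2 : ℝ))
        (g := fun y : ℝ => Real.exp (-(2 * π) * y)) ?_ ?_
      · exact integrable_const _
      · exact integrableOn_exp_mul_Ioi (by linarith [Real.pi_pos]) 0
    rw [Measure.prod_restrict] at hg
    refine hg.mono' ?_ ?_
    · apply Continuous.aestronglyMeasurable
      unfold Function.uncurry hh
      fun_prop
    · refine (ae_restrict_mem (measurableSet_Ico.prod measurableSet_Ioi)).mono fun z hz => ?_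
      have hy : 0 < z.2 := hz.2
      have h0 := hexp1 z.2 hy
      simp only [Function.uncurry]
      rw [Real.norm_of_nonneg (by positivity)]
      have hn : ‖∑ n ∈ S, hh ψ L c z.2 n * Complex.exp (2 * π * Complex.I * n * z.1)‖ ≤
          S.card * B := by
        calc _ ≤ ∑ n ∈ S, B := by
              apply norm_sum_le_of_le
              intro n _
              have hb := hh_bound ψ hsupp L hL c z.2 M hM hy.le n
              have e1 : ‖Complex.exp (2 * π * Complex.I * n * z.1)‖ = 1 := by
                have : (2 * π * Complex.I * n * z.1 : ℂ) =
                    ((2 * π * n * z.1 : ℝ) : ℂ) * Complex.I := by push_cast; ring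
                rw [this, Complex.norm_exp_ofReal_mul_I]
              rw [norm_mul, e1, mul_one]
              have hM0 : 0 ≤ M := (norm_nonneg _).trans (hM 0)
              have hB0 : 0 ≤ B := by positivity
              have e2 : Real.exp (-(2 * π * z.2 / (3 * L))) ≤ 1 := Real.exp_le_one_iff.2 (by
                have : 0 < 2 * π * z.2 / (3 * L) := by positivity
                linarith)
              nlinarith
          _ = _ := by simp
      have e3 : 1 - Real.exp (-(4 * π * z.2)) ≤ 1 := by
        linarith [Real.exp_pos (-(4 * π * z.2))]
      calc _ ≤ (S.card * B) ^ 2 * 1 * Real.exp (-(2 * π * z.2)) := by gcongr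
        _ = _ := by rw [mul_one, neg_mul]
end
end

section
/- For all dyadic intervals I, J ⊆ ℝ, ∫_{ℂ_+} F_I(x+iy) \overline{F_J(x+iy)} y dx dy = |I| if I = J, and = 0 if I ≠ J, where ℂ_+ = {x+iy : x ∈ ℝ, y > 0}. -/
open MeasureTheory Complex Real
open scoped FourierTransform

noncomputable section

lemma aux_y_integral {c : ℝ} (hc : 0 < c) :
    ∫ y in Set.Ioi (0 : ℝ), y * Real.exp (-(c * y)) = 1 / c ^ 2 := by
  have h := Real.integral_rpow_mul_exp_neg_mul_Ioi (a := 2) (r := c) (by norm_num) hc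
  have h2 : Real.Gamma 2 = 1 := by
    exact Real.Gamma_two
  rw [h2] at h
  norm_num at h
  rw [h]; simp

lemma aux_y_integrable {c : ℝ} (hc : 0 < c) :
    IntegrableOn (fun y : ℝ => y * Real.exp (-(c * y))) (Set.Ioi 0) := by
  by_contra h
  have h1 := aux_y_integral hc
  rw [integral_undef h] at h1
  have : 0 < 1 / c ^ 2 := by positivity
  linarith

lemma aux_fubini (P Q : ℝ → ℂ) (hP : Continuous P) (hQ : Continuous Q) (a b : ℝ) (ha : 0 < a)
    (hs : ∀ ξ, P ξ ≠ 0 → a ≤ |ξ| ∧ |ξ| ≤ b) :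
    ∫ y in Set.Ioi (0 : ℝ), ∫ ξ : ℝ,
      ((16 * π ^ 2 * |ξ| ^ 2 * (y * Real.exp (-((4 * π * |ξ|) * y))) : ℝ) : ℂ) *
        (P ξ * (starRingEnd ℂ) (Q ξ)) = ∫ ξ : ℝ, P ξ * (starRingEnd ℂ) (Q ξ) := by
  set K : ℝ → ℂ := fun ξ => ((16 * π ^ 2 * |ξ| ^ 2 : ℝ) : ℂ) * (P ξ * (starRingEnd ℂ) (Q ξ)) with hK
  have hKc : Continuous K := by
    have : Continuous fun ξ => (starRingEnd ℂ) (Q ξ) := Complex.continuous_conj.comp hQ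
    fun_prop
  have hKi : Integrable K := by
    apply hKc.integrable_of_hasCompactSupport
    apply HasCompactSupport.intro (isCompact_Icc (a := -b) (b := b))
    intro ξ hξ
    by_contra h
    have : P ξ ≠ 0 := by
      intro h0; apply h; simp [hK, h0]
    exact hξ (abs_le.mp (hs ξ this).2)
  rw [integral_integral_swap]
  · apply integral_congr_ae
    filter_upwards with ξ
    by_cases h0 : P ξ = 0
    · simp [h0]
    have hξ : 0 < |ξ| := lt_of_lt_of_le ha (hs ξ h0).1
    rw [integral_mul_const, integral_complex_ofReal, integral_const_mul,
      aux_y_integral (by positivity)]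
    have : 16 * π ^ 2 * |ξ| ^ 2 * (1 / (4 * π * |ξ|) ^ 2) = 1 := by
      field_simp; norm_num
    rw [this]; simp
  · have hint := (aux_y_integrable (c := 4 * π * a) (by positivity)).mul_prod hKi.norm
    refine Integrable.mono' hint ?_ ?_
    · apply Continuous.aestronglyMeasurable
      have : Continuous fun ξ => (starRingEnd ℂ) (Q ξ) := Complex.continuous_conj.comp hQ
      simp only [Function.uncurry_def]
      fun_prop
    · have hy : ∀ᵐ z : ℝ × ℝ ∂((volume.restrict (Set.Ioi 0)).prod volume), 0 < z.1 := by
        have := (Measure.quasiMeasurePreserving_fst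
          (μ := (volume : Measure ℝ).restrict (Set.Ioi 0)) (ν := (volume : Measure ℝ))).ae
          (ae_restrict_mem measurableSet_Ioi)
        exact this
      filter_upwards [hy] with z hz
      obtain ⟨y, ξ⟩ := z
      simp only [Function.uncurry_apply_pair] at hz ⊢
      by_cases h0 : P ξ = 0
      · simp [h0, hK]
      have hξ := (hs ξ h0).1
      simp only [hK]
      rw [norm_mul, norm_mul, norm_mul, Complex.norm_real, Complex.norm_real, Real.norm_eq_abs,
        Real.norm_eq_abs]
      rw [abs_of_nonneg (by positivity : 0 ≤ 16 * π ^ 2 * |ξ| ^ 2),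
        abs_of_nonneg (by positivity :
        0 ≤ 16 * π ^ 2 * |ξ| ^ 2 * (y * Real.exp (-((4 * π * |ξ|) * y))))]
      have he : Real.exp (-((4 * π * |ξ|) * y)) ≤ Real.exp (-((4 * π * a) * y)) := by
        gcongr
      calc 16 * π ^ 2 * |ξ| ^ 2 * (y * Real.exp (-(4 * π * |ξ| * y))) *
            (‖P ξ‖ * ‖(starRingEnd ℂ) (Q ξ)‖) 
          ≤ 16 * π ^ 2 * |ξ| ^ 2 * (y * Real.exp (-(4 * π * a * y))) *
            (‖P ξ‖ * ‖(starRingEnd ℂ) (Q ξ)‖) := by gcongr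
        _ = _ := by rw [norm_mul (P ξ)]; ring

lemma aux_schwartz (ψ : SchwartzMap ℝ ℂ) (j k : ℤ) :
    ∃ f : SchwartzMap ℝ ℂ, ⇑f = psiI ψ j k := by
  have hl := len_pos j
  let e : ℝ ≃L[ℝ] ℝ := ContinuousLinearEquiv.unitsEquivAut ℝ (Units.mk0 (len j)⁻¹ (by positivity))
  refine ⟨(((Real.sqrt (len j))⁻¹ : ℝ) : ℂ) • SchwartzMap.compSubConstCLM ℂ (ctr j k)
    (SchwartzMap.compCLMOfContinuousLinearEquiv ℂ e ψ), ?_⟩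
  ext x
  simp [psiI, e, div_eq_mul_inv]

lemma aux_fourier (ψ : SchwartzMap ℝ ℂ) (j k : ℤ) (ξ : ℝ) (h : 𝓕 (psiI ψ j k) ξ ≠ 0) :
    𝓕 (⇑ψ) (len j * ξ) ≠ 0 := by
  have hl := len_pos j
  intro h0
  apply h
  rw [Real.fourier_real_eq_integral_exp_smul] at h0 ⊢
  have := integral_sub_right_eq_self (μ := (volume : Measure ℝ)) (fun x : ℝ =>
    Complex.exp (↑(-2 * π * (x + ctr j k) * ξ) * Complex.I) •
      ((((Real.sqrt (len j))⁻¹ : ℝ) : ℂ) * ψ (x / len j))) (ctr j k)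
  simp only [psiI]
  simp only [sub_add_cancel] at this
  rw [this]
  have h2 := Measure.integral_comp_div (fun x : ℝ =>
    Complex.exp (↑(-2 * π * (len j * x + ctr j k) * ξ) * Complex.I) •
      ((((Real.sqrt (len j))⁻¹ : ℝ) : ℂ) * ψ x)) (len j)
  have h3 : ∀ x : ℝ, len j * (x / len j) = x := fun x => by field_simp
  simp only [h3] at h2
  rw [h2]
  have h4 : ∀ x : ℝ, Complex.exp (↑(-2 * π * (len j * x + ctr j k) * ξ) * Complex.I) •
      ((((Real.sqrt (len j))⁻¹ : ℝ) : ℂ) * ψ x) =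
      (Complex.exp (↑(-2 * π * ctr j k * ξ) * Complex.I) * (((Real.sqrt (len j))⁻¹ : ℝ) : ℂ)) *
      (Complex.exp (↑(-2 * π * x * (len j * ξ)) * Complex.I) • ψ x) := by
    intro x
    have : (↑(-2 * π * (len j * x + ctr j k) * ξ) * Complex.I) =
      (↑(-2 * π * ctr j k * ξ) * Complex.I) + (↑(-2 * π * x * (len j * ξ)) * Complex.I) := by
      push_cast; ring
    rw [this, Complex.exp_add, smul_eq_mul, smul_eq_mul]
    ring
  simp only [h4]
  rw [integral_const_mul, h0]
  simp

lemma aux_supp (ψ : SchwartzMap ℝ ℂ)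
    (hsupp : Function.support (𝓕 ⇑ψ) ⊆
      Set.Icc (-(4 / 3) : ℝ) (-(1 / 3)) ∪ Set.Icc (1 / 3) (4 / 3)) (j k : ℤ) (ξ : ℝ)
    (h : 𝓕 (psiI ψ j k) ξ ≠ 0) : (1 / 3) / len j ≤ |ξ| ∧ |ξ| ≤ (4 / 3) / len j := by
  have hl := len_pos j
  have h1 := hsupp (aux_fourier ψ j k ξ h)
  have h2 : 1 / 3 ≤ |len j * ξ| ∧ |len j * ξ| ≤ 4 / 3 := by
    rcases h1 with ⟨h1, h2⟩ | ⟨h1, h2⟩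
    · rw [abs_of_neg (by linarith)]; constructor <;> linarith
    · rw [abs_of_pos (by linarith)]; constructor <;> linarith
  rw [abs_mul, abs_of_pos hl] at h2
  constructor
  · rw [div_le_iff₀ hl]; linarith
  · rw [le_div_iff₀ hl]; linarith

/-- multiplying a compactly supported (away from zero) smooth function. -/
lemma aux_mult (P : ℝ → ℂ) (hP : ContDiff ℝ ((⊤ : ℕ∞) : WithTop ℕ∞) P) (a b : ℝ) (ha : 0 < a)
    (hs : ∀ ξ, P ξ ≠ 0 → a ≤ |ξ| ∧ |ξ| ≤ b) (c y : ℝ) :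
    ∃ f : SchwartzMap ℝ ℂ, ∀ ξ, f ξ =
      ((4 * π * |ξ| * c * Real.exp (-(2 * π * |ξ| * y)) : ℝ) : ℂ) * P ξ := by
  have hc : HasCompactSupport fun ξ : ℝ =>
      ((4 * π * |ξ| * c * Real.exp (-(2 * π * |ξ| * y)) : ℝ) : ℂ) * P ξ := by
    apply HasCompactSupport.intro (isCompact_Icc (a := -b) (b := b))
    intro ξ hξ
    by_contra h
    exact hξ (abs_le.mp (hs ξ (right_ne_zero_of_mul h)).2)
  refine ⟨hc.toSchwartzMap ?_, fun ξ => rfl⟩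
  rw [contDiff_iff_contDiffAt]
  intro ξ
  by_cases h : ξ = 0
  · subst h
    have h0 : (fun ξ : ℝ =>
        ((4 * π * |ξ| * c * Real.exp (-(2 * π * |ξ| * y)) : ℝ) : ℂ) * P ξ)
        =ᶠ[nhds 0] fun _ => 0 := by
      have : ∀ᶠ ξ : ℝ in nhds 0, |ξ| < a := by
        apply (continuous_abs.tendsto (0 : ℝ)).eventually_lt_const
        simpa using ha
      filter_upwards [this] with ξ hξ
      by_contra h
      exact absurd (hs ξ (right_ne_zero_of_mul h)).1 (not_le.mpr hξ)
    exact contDiffAt_const.congr_of_eventuallyEq h0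
  · have habs : ContDiffAt ℝ ((⊤ : ℕ∞) : WithTop ℕ∞) (fun ξ : ℝ => |ξ|) ξ := contDiffAt_abs h
    refine ContDiffAt.mul ?_ hP.contDiffAt
    have hr : ContDiffAt ℝ ((⊤ : ℕ∞) : WithTop ℕ∞)
        (fun ξ : ℝ => 4 * π * |ξ| * c * Real.exp (-(2 * π * |ξ| * y))) ξ := by
      fun_prop
    exact Complex.ofRealCLM.contDiff.contDiffAt.comp ξ hr

lemma aux_plancherel_inv (f g : SchwartzMap ℝ ℂ) :
    ∫ x : ℝ, 𝓕⁻ (⇑f) x * (starRingEnd ℂ) (𝓕⁻ (⇑g) x) = ∫ ξ : ℝ, f ξ * (starRingEnd ℂ) (g ξ) := by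
  have h := SchwartzMap.integral_inner_fourier_fourier (𝓕⁻ g) (𝓕⁻ f)
  simp only [FourierTransform.fourier_fourierInv_eq, SchwartzMap.fourierInv_coe] at h
  simpa [RCLike.inner_apply] using h.symm

lemma aux_plancherel (f g : SchwartzMap ℝ ℂ) :
    ∫ x : ℝ, 𝓕 (⇑f) x * (starRingEnd ℂ) (𝓕 (⇑g) x) = ∫ ξ : ℝ, f ξ * (starRingEnd ℂ) (g ξ) := by
  have h := SchwartzMap.integral_inner_fourier_fourier g f
  simp only [SchwartzMap.fourier_coe] at h
  simpa [RCLike.inner_apply] using h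

lemma aux_FI (ψ : SchwartzMap ℝ ℂ) (j k : ℤ) (y : ℝ) (f : SchwartzMap ℝ ℂ)
    (hf : ∀ ξ, f ξ = ((4 * π * |ξ| * Real.sqrt (len j) * Real.exp (-(2 * π * |ξ| * y)) : ℝ) : ℂ) *
      𝓕 (psiI ψ j k) ξ) (x : ℝ) : FI ψ j k x y = 𝓕⁻ (⇑f) x := by
  rw [Real.fourierInv_eq', FI]
  congr 1
  ext ξ
  rw [hf, smul_eq_mul, mul_comm]
  congr 2
  simp
  ring

/-- Littlewood–Paley orthogonality: for all dyadic intervals `I, J ⊆ ℝ`,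
`∫_{ℂ_+} F_I \overline{F_J} y dx dy = |I| δ_{IJ}`. -/
theorem stmt_8 (ψ : SchwartzMap ℝ ℂ)
    (hsupp : Function.support (𝓕 ⇑ψ) ⊆
      Set.Icc (-(4 / 3) : ℝ) (-(1 / 3)) ∪ Set.Icc (1 / 3) (4 / 3))
    (horth : ∀ j k j' k' : ℤ,
      (∫ x : ℝ, psiI ψ j k x * (starRingEnd ℂ) (psiI ψ j' k' x)) =
        if j = j' ∧ k = k' then 1 else 0) :
    ∀ j k j' k' : ℤ,
      (∫ y in Set.Ioi (0 : ℝ), ∫ x : ℝ,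
          FI ψ j k x y * (starRingEnd ℂ) (FI ψ j' k' x y) * ((y : ℝ) : ℂ))
        = if j = j' ∧ k = k' then ((len j : ℝ) : ℂ) else 0 := by
  intro j k j' k'
  have hl := len_pos j
  have hl' := len_pos j'
  obtain ⟨p, hp⟩ := aux_schwartz ψ j k
  obtain ⟨q, hq⟩ := aux_schwartz ψ j' k'
  have hPs : ContDiff ℝ ((⊤ : ℕ∞) : WithTop ℕ∞) (𝓕 (psiI ψ j k)) := by
    rw [← hp, ← SchwartzMap.fourier_coe]; exact (𝓕 p).smooth'
  have hQs : ContDiff ℝ ((⊤ : ℕ∞) : WithTop ℕ∞) (𝓕 (psiI ψ j' k')) := by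
    rw [← hq, ← SchwartzMap.fourier_coe]; exact (𝓕 q).smooth'
  have hin : ∀ y : ℝ, (∫ x : ℝ,
      FI ψ j k x y * (starRingEnd ℂ) (FI ψ j' k' x y) * ((y : ℝ) : ℂ)) =
      ((Real.sqrt (len j) * Real.sqrt (len j') : ℝ) : ℂ) * ∫ ξ : ℝ,
      ((16 * π ^ 2 * |ξ| ^ 2 * (y * Real.exp (-((4 * π * |ξ|) * y))) : ℝ) : ℂ) *
        (𝓕 (psiI ψ j k) ξ * (starRingEnd ℂ) (𝓕 (psiI ψ j' k') ξ)) := by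
    intro y
    obtain ⟨f, hf⟩ := aux_mult _ hPs _ _ (by positivity) (aux_supp ψ hsupp j k)
      (Real.sqrt (len j)) y
    obtain ⟨g, hg⟩ := aux_mult _ hQs _ _ (by positivity) (aux_supp ψ hsupp j' k')
      (Real.sqrt (len j')) y
    simp only [aux_FI ψ j k y f hf, aux_FI ψ j' k' y g hg]
    rw [integral_mul_const, aux_plancherel_inv, ← integral_mul_const, ← integral_const_mul]
    congr 1
    ext ξ
    have he : Real.exp (-((4 * π * |ξ|) * y)) =
        Real.exp (-(2 * π * |ξ| * y)) * Real.exp (-(2 * π * |ξ| * y)) := by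
      rw [← Real.exp_add]; congr 1; ring
    rw [hf, hg, he, map_mul, Complex.conj_ofReal]
    push_cast
    ring
  simp only [hin]
  rw [integral_const_mul, aux_fubini _ _ hPs.continuous hQs.continuous _ _ (by positivity)
    (aux_supp ψ hsupp j k), ← hp, ← hq, aux_plancherel, hp, hq, horth]
  split_ifs with h
  · rw [← h.1, Real.mul_self_sqrt hl.le, mul_one]
  · simp
end
end

section
/- Let f, g : ℝ → ℂ be Schwartz functions, and for y > 0 define the Poisson extensions of Df and Dg by F(x+iy) = ∫_ℝ 4π|ξ| f̂(ξ) e^{-2π|ξ|y} e^{2πixξ} dξ and G(x+iy) = ∫_ℝ 4π|ξ| ĝ(ξ) e^{-2π|ξ|y} e^{2πixξ} dξ. Then ∫_{ℂ_+} F(x+iy) \overline{G(x+iy)} y dx dy = ∫_ℝ f(x) \overline{g(x)} dx, where ℂ_+ = {x+iy : x ∈ ℝ, y > 0}. (This is the Littlewood–Paley identity obtained by Green's formula for the operator D with Fourier symbol 4π|ξ|.) -/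
open MeasureTheory Complex Real
open scoped FourierTransform

noncomputable section

/-- The Poisson extension to the upper half-plane of `Df`, where `D` is the Fourier multiplier
operator with symbol `4π|ξ|`: `F(x+iy) = ∫ 4π|ξ| f̂(ξ) e^{-2π|ξ|y} e^{2πixξ} dξ`. -/
def poissonExtD (f : SchwartzMap ℝ ℂ) (x y : ℝ) : ℂ :=
  ∫ ξ : ℝ, ((4 * π * |ξ| * Real.exp (-(2 * π * |ξ| * y)) : ℝ) : ℂ) * 𝓕 ⇑f ξ *
    Complex.exp (2 * (π : ℂ) * Complex.I * (x : ℂ) * (ξ : ℂ))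

lemma fourierInv_selfadj {φ h : ℝ → ℂ} (hφ : Integrable φ) (hh : Integrable h) :
    ∫ x, 𝓕⁻ φ x * h x = ∫ x, φ x * 𝓕⁻ h x := by
  have hL : (-innerₗ ℝ : ℝ →ₗ[ℝ] ℝ →ₗ[ℝ] ℝ).flip = -innerₗ ℝ := by
    ext; simp
  have := VectorFourier.integral_fourierIntegral_smul_eq_flip (L := -innerₗ ℝ) (μ := volume)
    (ν := volume) (e := 𝐞) Real.continuous_fourierChar
    (by simp only [LinearMap.neg_apply, innerₗ_apply_apply]; fun_prop) hφ hh
  rw [hL] at this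
  exact this

lemma l2_fourierInv {h : ℝ → ℂ} (h1 : Integrable h) (h2 : MemLp h 2) :
    ((𝓕⁻ (h2.toLp h) : Lp ℂ 2 (volume : Measure ℝ)) : ℝ → ℂ) =ᵐ[volume] 𝓕⁻ h := by
  apply ae_eq_of_integral_contDiff_smul_eq
  · exact (Lp.memLp _).locallyIntegrable (by norm_num)
  · apply Continuous.locallyIntegrable
    exact VectorFourier.fourierIntegral_continuous (L := -innerₗ ℝ) Real.continuous_fourierChar
      (by simp only [LinearMap.neg_apply, innerₗ_apply_apply]; fun_prop) h1
  · intro g g_smooth g_cpt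
    have hg₁ : HasCompactSupport (Complex.ofRealCLM ∘ g) := g_cpt.comp_left rfl
    have hg₂ : ContDiff ℝ (⊤ : ℕ∞) (Complex.ofRealCLM ∘ g) := by fun_prop
    set φ := hg₁.toSchwartzMap hg₂ with hφ
    have hφx : ∀ x, φ x = (g x : ℂ) := fun x => rfl
    calc
      _ = Lp.toTemperedDistribution (𝓕⁻ (h2.toLp h) : Lp ℂ 2 (volume : Measure ℝ)) φ := by
        simp [Lp.toTemperedDistribution_apply, hφx]
      _ = ∫ x, 𝓕⁻ φ x * h x := by
        rw [← Lp.fourierInv_toTemperedDistribution_eq, TemperedDistribution.fourierInv_apply,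
          Lp.toTemperedDistribution_apply]
        apply integral_congr_ae
        filter_upwards [h2.coeFn_toLp] with x hx
        rw [hx, smul_eq_mul]
      _ = ∫ x, φ x * 𝓕⁻ h x := by
        rw [SchwartzMap.fourierInv_coe]
        exact fourierInv_selfadj φ.integrable h1
      _ = _ := by simp [hφx]

lemma plancherel12 {h k : ℝ → ℂ} (h1 : Integrable h) (h2 : MemLp h 2)
    (k1 : Integrable k) (k2 : MemLp k 2) :
    ∫ x, 𝓕⁻ h x * (starRingEnd ℂ) (𝓕⁻ k x) = ∫ x, h x * (starRingEnd ℂ) (k x) := by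
  have e := Lp.inner_fourier_eq (𝓕⁻ (k2.toLp k) : Lp ℂ 2 (volume : Measure ℝ))
    (𝓕⁻ (h2.toLp h) : Lp ℂ 2 (volume : Measure ℝ))
  rw [FourierTransform.fourier_fourierInv_eq, FourierTransform.fourier_fourierInv_eq,
    L2.inner_def, L2.inner_def] at e
  calc _ = _ := integral_congr_ae (by
          filter_upwards [l2_fourierInv h1 h2, l2_fourierInv k1 k2] with x hx hy
          rw [← hx, ← hy, ← RCLike.inner_apply])
    _ = _ := e.symm
    _ = _ := integral_congr_ae (by
          filter_upwards [h2.coeFn_toLp, k2.coeFn_toLp] with x hx hy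
          rw [hx, hy, RCLike.inner_apply])

/-- The Fourier-side density of the Poisson extension. -/
def dens (f : SchwartzMap ℝ ℂ) (y ξ : ℝ) : ℂ :=
  ((4 * π * |ξ| * Real.exp (-(2 * π * |ξ| * y)) : ℝ) : ℂ) * 𝓕 f ξ

lemma dens_memLp (f : SchwartzMap ℝ ℂ) {y : ℝ} (hy : 0 < y) (p : ENNReal) :
    MemLp (dens f y) p := by
  refine ((𝓕 f).memLp p).of_le_mul (c := 2 / y) ?_ (ae_of_all _ fun ξ => ?_)
  · apply Continuous.aestronglyMeasurable
    have := (𝓕 f).continuous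
    unfold dens
    fun_prop
  · unfold dens
    rw [norm_mul, Complex.norm_real, Real.norm_of_nonneg (by positivity)]
    gcongr
    rw [le_div_iff₀ hy, Real.exp_neg, ← div_eq_mul_inv, div_mul_eq_mul_div,
      div_le_iff₀ (Real.exp_pos _)]
    have := Real.add_one_le_exp (2 * π * |ξ| * y)
    nlinarith

lemma poissonExtD_eq (f : SchwartzMap ℝ ℂ) (x y : ℝ) :
    poissonExtD f x y = 𝓕⁻ (dens f y) x := by
  rw [Real.fourierInv_eq', poissonExtD]
  congr 1; ext ξ
  rw [dens, SchwartzMap.fourier_coe, smul_eq_mul, mul_comm]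
  congr 2
  simp
  ring

lemma y_integrable {r : ℝ} (hr : 0 < r) :
    IntegrableOn (fun y : ℝ => r ^ 2 * (y * Real.exp (-(r * y)))) (Set.Ioi 0) := by
  have := integrableOn_rpow_mul_exp_neg_mul_rpow (p := 1) (s := 1) (b := r)
    (by norm_num) (by norm_num) hr
  simp only [Real.rpow_one, neg_mul] at this
  exact this.const_mul _

lemma y_integral {r : ℝ} (hr : 0 < r) :
    ∫ y in Set.Ioi (0 : ℝ), r ^ 2 * (y * Real.exp (-(r * y))) = 1 := by
  have := Real.integral_rpow_mul_exp_neg_mul_Ioi (a := 2) (r := r) (by norm_num) hr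
  rw [integral_const_mul]
  have e : (2 : ℝ) - 1 = 1 := by norm_num
  simp only [e, Real.rpow_one, Real.Gamma_two] at this
  rw [this]
  simp
  field_simp

lemma kernel_eq (f g : SchwartzMap ℝ ℂ) (y ξ : ℝ) :
    dens f y ξ * (starRingEnd ℂ) (dens g y ξ) * (y : ℂ) =
    (((4 * π * |ξ|) ^ 2 * (y * Real.exp (-((4 * π * |ξ|) * y))) : ℝ) : ℂ) *
      (𝓕 f ξ * (starRingEnd ℂ) (𝓕 g ξ)) := by
  have : Real.exp (-((4 * π * |ξ|) * y)) = Real.exp (-(2 * π * |ξ| * y)) ^ 2 := by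
    rw [← Real.exp_nat_mul]; congr 1; push_cast; ring
  rw [this, dens, dens, map_mul, Complex.conj_ofReal]
  push_cast
  ring

lemma kernel_integrable (f g : SchwartzMap ℝ ℂ) :
    Integrable (Function.uncurry fun y ξ : ℝ =>
      (((4 * π * |ξ|) ^ 2 * (y * Real.exp (-((4 * π * |ξ|) * y))) : ℝ) : ℂ) *
      (𝓕 f ξ * (starRingEnd ℂ) (𝓕 g ξ)))
      ((volume.restrict (Set.Ioi (0 : ℝ))).prod volume) := by
  have cf := (𝓕 f).continuous
  have cg := (𝓕 g).continuous
  have h0 : ∀ᵐ ξ : ℝ, ξ ≠ 0 := by simp [ae_iff]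
  rw [integrable_prod_iff' (Continuous.aestronglyMeasurable (by
    simp only [Function.uncurry_def]
    have := Complex.continuous_conj
    fun_prop))]
  constructor
  · filter_upwards [h0] with ξ hξ
    have := ((y_integrable (r := 4 * π * |ξ|) (by positivity)).ofReal (𝕜 := ℂ)).mul_const
      (𝓕 f ξ * (starRingEnd ℂ) (𝓕 g ξ))
    exact this
  · have hi : Integrable (fun ξ => ‖𝓕 f ξ * (starRingEnd ℂ) (𝓕 g ξ)‖) := by
      apply Integrable.norm
      refine MemLp.integrable_mul (p := 2) (q := 2) ((𝓕 f).memLp 2)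
        (g := fun ξ => (starRingEnd ℂ) (𝓕 g ξ)) (((𝓕 g).memLp 2 volume).star)
    refine hi.congr ?_
    filter_upwards [h0] with ξ hξ
    simp only [Function.uncurry]
    rw [← one_mul ‖𝓕 f ξ * _‖, ← y_integral (r := 4 * π * |ξ|) (by positivity),
      ← integral_mul_const]
    refine setIntegral_congr_fun measurableSet_Ioi fun y hy => ?_
    have hy : 0 < y := hy
    rw [norm_mul (_ : ℂ) (_ * _), Complex.norm_real, Real.norm_of_nonneg (by positivity)]

/-- The Littlewood–Paley identity: for Schwartz `f, g`,
`∫_{ℂ_+} F(x+iy) \overline{G(x+iy)} y dx dy = ∫_ℝ f \bar{g}`, where `F, G` are the Poisson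
extensions of `Df, Dg`. -/
theorem stmt_9 (f g : SchwartzMap ℝ ℂ) :
    (∫ y in Set.Ioi (0 : ℝ), ∫ x : ℝ,
        poissonExtD f x y * (starRingEnd ℂ) (poissonExtD g x y) * ((y : ℝ) : ℂ))
      = ∫ x : ℝ, f x * (starRingEnd ℂ) (g x) := by
  have step : ∀ y ∈ Set.Ioi (0 : ℝ), (∫ x : ℝ,
        poissonExtD f x y * (starRingEnd ℂ) (poissonExtD g x y) * ((y : ℝ) : ℂ)) =
      ∫ ξ : ℝ, (((4 * π * |ξ|) ^ 2 * (y * Real.exp (-((4 * π * |ξ|) * y))) : ℝ) : ℂ) *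
      (𝓕 f ξ * (starRingEnd ℂ) (𝓕 g ξ)) := by
    intro y hy
    have hy : 0 < y := hy
    simp only [← kernel_eq, poissonExtD_eq]
    rw [integral_mul_const, integral_mul_const,
      plancherel12 (memLp_one_iff_integrable.1 (dens_memLp f hy 1)) (dens_memLp f hy 2)
        (memLp_one_iff_integrable.1 (dens_memLp g hy 1)) (dens_memLp g hy 2)]
  rw [setIntegral_congr_fun measurableSet_Ioi step, integral_integral_swap (kernel_integrable f g)]
  have h0 : ∀ᵐ ξ : ℝ, ξ ≠ 0 := by simp [ae_iff]
  have pl := SchwartzMap.integral_inner_fourier_fourier g f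
  simp only [RCLike.inner_apply] at pl
  rw [← pl]
  apply integral_congr_ae
  filter_upwards [h0] with ξ hξ
  rw [integral_mul_const, integral_complex_ofReal, y_integral (by positivity)]
  simp
end
end

section
/- Let φ : ℝ → ℂ be a Schwartz function such that d = dist(supp(φ̂), 0) > 0, and let p be a polynomial of degree n. Then there exists a constant C > 0 (depending on φ and p) such that |p(x) (φ * P_y)(x)| ≤ C (1 + yⁿ) e^{-2πdy} / y^{1/2} for all x ∈ ℝ and y > 0, where P_y(t) = (1/π) y/(t² + y²) is the Poisson kernel of the upper half-plane and (φ * P_y)(x) = ∫_ℝ φ(t) P_y(x-t) dt. -/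
open MeasureTheory Complex Real
open scoped FourierTransform

noncomputable section

/-- The Poisson kernel of the upper half-plane, `P_y(t) = (1/π) y/(t²+y²)`. -/
def poissonKer (y t : ℝ) : ℝ := (1 / π) * y / (t ^ 2 + y ^ 2)

/-- The extended exponential `e^{-2π|ξ|y + 2πixξ}`. -/
def poisE (x y ξ : ℝ) : ℂ :=
  Complex.exp (((-(2 * π * y) * |ξ| : ℝ) : ℂ) + ((2 * π * x * ξ : ℝ) : ℂ) * Complex.I)

lemma poisE_norm (x y ξ : ℝ) : ‖poisE x y ξ‖ = Real.exp (-(2 * π * y) * |ξ|) := by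
  unfold poisE
  rw [Complex.exp_add, norm_mul, Complex.norm_exp_ofReal_mul_I, mul_one, Complex.norm_exp,
    Complex.ofReal_re]

lemma poisE_continuous (x y : ℝ) : Continuous (poisE x y) := by
  unfold poisE
  fun_prop

lemma poisE_norm_le_one (x y ξ : ℝ) (hy : 0 < y) : ‖poisE x y ξ‖ ≤ 1 := by
  rw [poisE_norm, Real.exp_le_one_iff]
  have : 0 ≤ 2 * π * y * |ξ| := by positivity
  linarith

lemma poisE_pos (x y ξ : ℝ) (h : 0 ≤ ξ) :
    poisE x y ξ = Complex.exp ((-(2 * π * y) + 2 * π * x * Complex.I : ℂ) * ξ) := by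
  unfold poisE
  rw [abs_of_nonneg h]
  push_cast
  ring_nf

lemma poisE_neg (x y ξ : ℝ) (h : ξ ≤ 0) :
    poisE x y ξ = Complex.exp ((2 * π * y + 2 * π * x * Complex.I : ℂ) * ξ) := by
  unfold poisE
  rw [abs_of_nonpos h]
  push_cast
  ring_nf

lemma poisE_intIoi (x y : ℝ) (hy : 0 < y) : IntegrableOn (poisE x y) (Set.Ioi 0) := by
  have ha : (-(2 * π * y) + 2 * π * x * Complex.I : ℂ).re < 0 := by
    simp; positivity
  refine (integrableOn_exp_mul_complex_Ioi ha 0).congr_fun (fun ξ hξ => ?_) measurableSet_Ioi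
  rw [poisE_pos x y ξ (le_of_lt hξ)]

lemma poisE_intIic (x y : ℝ) (hy : 0 < y) : IntegrableOn (poisE x y) (Set.Iic 0) := by
  have ha : 0 < (2 * π * y + 2 * π * x * Complex.I : ℂ).re := by
    simp; positivity
  refine (integrableOn_exp_mul_complex_Iic ha 0).congr_fun (fun ξ hξ => ?_) measurableSet_Iic
  rw [poisE_neg x y ξ hξ]

lemma poisE_integrable (x y : ℝ) (hy : 0 < y) : Integrable (poisE x y) := by
  rw [← integrableOn_univ, ← Set.Iic_union_Ioi (a := (0:ℝ))]
  exact (poisE_intIic x y hy).union (poisE_intIoi x y hy)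

lemma poisE_integral (x y : ℝ) (hy : 0 < y) :
    ∫ ξ, poisE x y ξ = ((poissonKer y x : ℝ) : ℂ) := by
  have ha : (-(2 * π * y) + 2 * π * x * Complex.I : ℂ).re < 0 := by
    simp; positivity
  have hb : 0 < (2 * π * y + 2 * π * x * Complex.I : ℂ).re := by
    simp; positivity
  have h1 : ∫ ξ in Set.Ioi (0:ℝ), poisE x y ξ
      = ∫ ξ in Set.Ioi (0:ℝ), Complex.exp ((-(2 * π * y) + 2 * π * x * Complex.I : ℂ) * ξ) :=
    setIntegral_congr_fun measurableSet_Ioi (fun ξ hξ => poisE_pos x y ξ (le_of_lt hξ))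
  have h2 : ∫ ξ in Set.Iic (0:ℝ), poisE x y ξ
      = ∫ ξ in Set.Iic (0:ℝ), Complex.exp ((2 * π * y + 2 * π * x * Complex.I : ℂ) * ξ) :=
    setIntegral_congr_fun measurableSet_Iic (fun ξ hξ => poisE_neg x y ξ hξ)
  have ha0 : (-(2 * π * y) + 2 * π * x * Complex.I : ℂ) ≠ 0 := fun h => by
    rw [h] at ha; simp at ha
  have hb0 : (2 * π * y + 2 * π * x * Complex.I : ℂ) ≠ 0 := fun h => by
    rw [h] at hb; simp at hb
  rw [← intervalIntegral.integral_Iic_add_Ioi (poisE_intIic x y hy) (poisE_intIoi x y hy), h1, h2,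
    integral_exp_mul_complex_Ioi ha, integral_exp_mul_complex_Iic hb]
  unfold poissonKer
  have hpi : (π : ℂ) ≠ 0 := by exact_mod_cast Real.pi_ne_zero
  have hxy : ((x : ℂ) ^ 2 + (y : ℂ) ^ 2) ≠ 0 := by
    have : x ^ 2 + y ^ 2 ≠ 0 := by positivity
    exact_mod_cast this
  push_cast
  simp only [mul_zero, Complex.exp_zero]
  rw [div_add_div _ _ hb0 ha0, div_eq_div_iff (mul_ne_zero hb0 ha0) hxy]
  field_simp
  linear_combination (-2 * y * x ^ 2 : ℂ) * Complex.I_sq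

lemma poisE_fourier (x y t : ℝ) (hy : 0 < y) :
    𝓕 (poisE x y) t = ((poissonKer y (x - t) : ℝ) : ℂ) := by
  rw [← poisE_integral _ _ hy, Real.fourier_eq']
  congr 1
  ext ξ
  unfold poisE
  rw [smul_eq_mul, ← Complex.exp_add]
  congr 1
  simp
  ring

lemma pois_rep (φ : SchwartzMap ℝ ℂ) (x y : ℝ) (hy : 0 < y) :
    ∫ t : ℝ, φ t * ((poissonKer y (x - t) : ℝ) : ℂ) = ∫ ξ, (𝓕 φ) ξ * poisE x y ξ := by
  have h := VectorFourier.integral_fourierIntegral_smul_eq_flip (L := innerₗ ℝ) (μ := volume)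
      (ν := volume) (f := φ) (g := poisE x y)
      Real.continuous_fourierChar continuous_inner φ.integrable (poisE_integrable x y hy)
  rw [flip_innerₗ] at h
  have h3 : ∀ t, VectorFourier.fourierIntegral 𝐞 volume (innerₗ ℝ) (poisE x y) t
      = ((poissonKer y (x - t) : ℝ) : ℂ) := fun t => poisE_fourier x y t hy
  simp only [h3, smul_eq_mul] at h
  exact h.symm

/-- The integrals used in the induction. -/
def poisI (g : SchwartzMap ℝ ℂ) (e : ℕ) (x y : ℝ) : ℂ :=
  ∫ ξ : ℝ, ((Real.sign ξ : ℝ) : ℂ) ^ e * g ξ * poisE x y ξ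

lemma sign_norm_le (ξ : ℝ) (e : ℕ) : ‖((Real.sign ξ : ℝ) : ℂ) ^ e‖ ≤ 1 := by
  rw [norm_pow]
  refine pow_le_one₀ (norm_nonneg _) ?_
  rcases Real.sign_apply_eq ξ with h | h | h <;> simp [h]

lemma measurable_rsign : Measurable Real.sign := by
  unfold Real.sign
  exact Measurable.ite measurableSet_Iio measurable_const
    (Measurable.ite measurableSet_Ioi measurable_const measurable_const)

lemma poisI_integrable (g : SchwartzMap ℝ ℂ) (e : ℕ) (x y : ℝ) (hy : 0 < y) :
    Integrable (fun ξ : ℝ => ((Real.sign ξ : ℝ) : ℂ) ^ e * g ξ * poisE x y ξ) := by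
  refine g.integrable.mono ?_ (Filter.Eventually.of_forall fun ξ => ?_)
  · have := measurable_rsign
    have h2 := g.continuous.measurable
    have h3 := (poisE_continuous x y).measurable
    exact (by fun_prop : Measurable _).aestronglyMeasurable
  · rw [norm_mul, norm_mul]
    calc _ ≤ 1 * ‖g ξ‖ * 1 := by
          gcongr
          · exact sign_norm_le _ _
          · exact poisE_norm_le_one _ _ _ hy
      _ = _ := by ring

lemma vanish_deriv (g : SchwartzMap ℝ ℂ) (d : ℝ) (hg : ∀ ξ, |ξ| < d → g ξ = 0) :
    ∀ ξ, |ξ| < d → SchwartzMap.derivCLM ℝ ℂ g ξ = 0 := by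
  intro ξ hξ
  rw [SchwartzMap.derivCLM_apply]
  have : (g : ℝ → ℂ) =ᶠ[nhds ξ] fun _ => 0 := by
    filter_upwards [(isOpen_lt continuous_abs continuous_const).mem_nhds hξ] with z hz
    exact hg z hz
  rw [this.deriv_eq]
  simp

lemma hasDeriv_main (g : SchwartzMap ℝ ℂ) (d : ℝ) (hd : 0 < d) (hg : ∀ ξ, |ξ| < d → g ξ = 0)
    (e : ℕ) (x y ξ : ℝ) :
    HasDerivAt (fun ξ : ℝ => ((Real.sign ξ : ℝ) : ℂ) ^ e * g ξ * poisE x y ξ)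
      (((Real.sign ξ : ℝ) : ℂ) ^ e * SchwartzMap.derivCLM ℝ ℂ g ξ * poisE x y ξ
        - (2 * π * y) * (((Real.sign ξ : ℝ) : ℂ) ^ (e + 1) * g ξ * poisE x y ξ)
        + (2 * π * Complex.I * x) * (((Real.sign ξ : ℝ) : ℂ) ^ e * g ξ * poisE x y ξ)) ξ := by
  have hgd : HasDerivAt g (SchwartzMap.derivCLM ℝ ℂ g ξ) ξ := by
    rw [SchwartzMap.derivCLM_apply]
    exact g.differentiableAt.hasDerivAt
  have hE : ∀ a : ℂ, HasDerivAt (fun ξ : ℝ => Complex.exp (a * ξ)) (Complex.exp (a * ξ) * a) ξ := by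
    intro a
    have : HasDerivAt (fun z : ℝ => a * (z : ℂ)) (a * 1) ξ :=
      (Complex.ofRealCLM.hasDerivAt (x := ξ)).const_mul a
    simpa using this.cexp
  rcases lt_trichotomy ξ 0 with h | h | h
  · have := ((hgd.const_mul ((-1 : ℂ) ^ e)).mul (hE (2 * π * y + 2 * π * x * Complex.I : ℂ)))
    rw [Real.sign_of_neg h, poisE_neg x y ξ h.le]
    refine (this.congr_of_eventuallyEq ?_).congr_deriv ?_
    · filter_upwards [Iio_mem_nhds h] with z hz
      rw [Real.sign_of_neg hz, poisE_neg x y z (le_of_lt hz)]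
      simp
    · push_cast
      ring
  · subst h
    have h0 : (fun ξ : ℝ => ((Real.sign ξ : ℝ) : ℂ) ^ e * g ξ * poisE x y ξ)
        =ᶠ[nhds 0] fun _ => 0 := by
      have h00 : |(0:ℝ)| < d := by simpa using hd
      filter_upwards [(isOpen_lt continuous_abs continuous_const).mem_nhds h00] with z hz
      rw [hg z hz]; simp
    refine ((hasDerivAt_const (0:ℝ) (0:ℂ)).congr_of_eventuallyEq h0).congr_deriv ?_
    rw [hg 0 (by simpa using hd), vanish_deriv g d hg 0 (by simpa using hd)]
    simp
  · have := ((hgd.const_mul ((1 : ℂ) ^ e)).mul (hE (-(2 * π * y) + 2 * π * x * Complex.I : ℂ)))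
    rw [Real.sign_of_pos h, poisE_pos x y ξ h.le]
    refine (this.congr_of_eventuallyEq ?_).congr_deriv ?_
    · filter_upwards [Ioi_mem_nhds h] with z hz
      rw [Real.sign_of_pos hz, poisE_pos x y z (le_of_lt hz)]
      simp
    · push_cast
      ring

lemma poisI_step (g : SchwartzMap ℝ ℂ) (d : ℝ) (hd : 0 < d) (hg : ∀ ξ, |ξ| < d → g ξ = 0)
    (e : ℕ) (x y : ℝ) (hy : 0 < y) :
    (2 * π * Complex.I * x) * poisI g e x y =
      (2 * π * y) * poisI g (e + 1) x y - poisI (SchwartzMap.derivCLM ℝ ℂ g) e x y := by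
  have i1 := poisI_integrable (SchwartzMap.derivCLM ℝ ℂ g) e x y hy
  have i2 := (poisI_integrable g (e + 1) x y hy).const_mul (2 * π * y : ℂ)
  have i3 := (poisI_integrable g e x y hy).const_mul (2 * π * Complex.I * x : ℂ)
  have h := integral_eq_zero_of_hasDerivAt_of_integrable
    (fun ξ => hasDeriv_main g d hd hg e x y ξ) ((i1.sub i2).add i3) (poisI_integrable g e x y hy)
  have h2 : ∫ ξ : ℝ, (((Real.sign ξ : ℝ) : ℂ) ^ e * SchwartzMap.derivCLM ℝ ℂ g ξ * poisE x y ξ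
        - (2 * π * y) * (((Real.sign ξ : ℝ) : ℂ) ^ (e + 1) * g ξ * poisE x y ξ)
        + (2 * π * Complex.I * x) * (((Real.sign ξ : ℝ) : ℂ) ^ e * g ξ * poisE x y ξ))
      = poisI (SchwartzMap.derivCLM ℝ ℂ g) e x y - (2 * π * y) * poisI g (e + 1) x y
        + (2 * π * Complex.I * x) * poisI g e x y := by
    unfold poisI
    have k1 := integral_add (i1.sub i2) i3
    have k2 := integral_sub i1 i2
    rw [integral_const_mul] at k1 k2
    refine k1.trans ?_
    congr 1
  rw [h2] at h
  linear_combination h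

lemma exp_tail (d a : ℝ) (hd : 0 < d) (ha : 0 < a) :
    Integrable (fun ξ : ℝ => (Set.Ici d).indicator (fun t => Real.exp (-a * t)) |ξ|) ∧
    ∫ ξ : ℝ, (Set.Ici d).indicator (fun t => Real.exp (-a * t)) |ξ|
      = 2 * (Real.exp (-a * d) / a) := by
  constructor
  · have hI : IntegrableOn (fun t => Real.exp (-a * t)) (Set.Ioi 0) :=
      integrableOn_exp_mul_Ioi (by linarith) 0
    have hI2 : IntegrableOn (fun t => Real.exp (a * t)) (Set.Iic 0) :=
      integrableOn_exp_mul_Iic ha 0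
    have hJ : Integrable (fun ξ : ℝ => Real.exp (-a * |ξ|)) := by
      rw [← integrableOn_univ, ← Set.Iic_union_Ioi (a := (0:ℝ))]
      refine (hI2.congr_fun (fun t ht => ?_) measurableSet_Iic).union
        (hI.congr_fun (fun t ht => ?_) measurableSet_Ioi)
      · simp [abs_of_nonpos (show t ≤ 0 from ht)]
      · simp [abs_of_pos (show 0 < t from ht)]
    have := hJ.indicator (s := (fun ξ : ℝ => |ξ|) ⁻¹' Set.Ici d)
      (measurable_norm measurableSet_Ici)
    exact this
  · rw [integral_comp_abs, setIntegral_indicator measurableSet_Ici]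
    have : Set.Ioi (0:ℝ) ∩ Set.Ici d = Set.Ici d :=
      Set.inter_eq_right.2 (fun t ht => lt_of_lt_of_le hd ht)
    rw [this, integral_Ici_eq_integral_Ioi, integral_exp_mul_Ioi (by linarith)]
    congr 1
    rw [neg_div_neg_eq]

lemma poisI_base (g : SchwartzMap ℝ ℂ) (d : ℝ) (hd : 0 < d) (hg : ∀ ξ, |ξ| < d → g ξ = 0)
    (e : ℕ) : ∃ C : ℝ, 0 < C ∧ ∀ x y : ℝ, 0 < y →
      ‖poisI g e x y‖ ≤ C * (Real.exp (-(2 * π * d * y)) / Real.sqrt y) := by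
  obtain ⟨B, hB⟩ : ∃ B, ∀ ξ, ‖g ξ‖ ≤ B := by
    exact ⟨_, fun ξ => SchwartzMap.norm_le_seminorm ℝ g ξ⟩
  have hB0 : 0 ≤ B := (norm_nonneg _).trans (hB 0)
  set A : ℝ := ∫ ξ, ‖g ξ‖ with hA
  have hA0 : 0 ≤ A := integral_nonneg fun _ => norm_nonneg _
  have hpt : ∀ x y ξ : ℝ, ‖((Real.sign ξ : ℝ) : ℂ) ^ e * g ξ * poisE x y ξ‖
      ≤ ‖g ξ‖ * Real.exp (-(2 * π * y) * |ξ|) := by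
    intro x y ξ
    rw [norm_mul, norm_mul, poisE_norm]
    gcongr
    calc _ ≤ 1 * ‖g ξ‖ := by gcongr; exact sign_norm_le _ _
      _ = _ := one_mul _
  refine ⟨A + B + 1, by positivity, fun x y hy => ?_⟩
  set X := Real.exp (-(2 * π * d * y)) with hX
  have hX0 : 0 < X := Real.exp_pos _
  have hs : 0 < Real.sqrt y := Real.sqrt_pos.2 hy
  have b1 : ‖poisI g e x y‖ ≤ A * X := by
    unfold poisI
    rw [hA, ← integral_mul_const]
    refine norm_integral_le_of_norm_le (g.integrable.norm.mul_const _)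
      (Filter.Eventually.of_forall fun ξ => ?_)
    by_cases h : |ξ| < d
    · simp [hg ξ h]
    · refine (hpt x y ξ).trans ?_
      push Not at h
      refine mul_le_mul_of_nonneg_left ?_ (norm_nonneg _)
      rw [hX]
      apply Real.exp_le_exp.2
      have : 2 * π * y * d ≤ 2 * π * y * |ξ| := by gcongr
      linarith
  have b2 : ‖poisI g e x y‖ ≤ B * (X / y) := by
    obtain ⟨t1, t2⟩ := exp_tail d (2 * π * y) hd (by positivity)
    have : ‖poisI g e x y‖ ≤ ∫ ξ : ℝ,
        B * (Set.Ici d).indicator (fun t => Real.exp (-(2 * π * y) * t)) |ξ| := by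
      unfold poisI
      refine norm_integral_le_of_norm_le (t1.const_mul _)
        (Filter.Eventually.of_forall fun ξ => ?_)
      by_cases h : |ξ| < d
      · simp [hg ξ h, h]
      · refine (hpt x y ξ).trans ?_
        rw [Set.indicator_of_mem (by simpa using h)]
        gcongr
        exact hB ξ
    rw [integral_const_mul, t2] at this
    refine this.trans ?_
    have e1 : Real.exp (-(2 * π * y) * d) = X := by rw [hX]; congr 1; ring
    rw [e1]
    gcongr
    have : 2 * (X / (2 * π * y)) = (X / y) / π := by field_simp
    rw [this]
    exact div_le_self (by positivity) (by linarith [Real.pi_gt_three])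
  rcases le_total y 1 with h1 | h1
  · have hs1 : Real.sqrt y ≤ 1 := Real.sqrt_le_one.2 h1
    have : X ≤ X / Real.sqrt y := by
      rw [le_div_iff₀ hs]; nlinarith
    calc _ ≤ A * X := b1
      _ ≤ A * (X / Real.sqrt y) := by gcongr
      _ ≤ _ := by gcongr; linarith
  · have hs1 : Real.sqrt y ≤ y := by
      rw [Real.sqrt_le_left hy.le]; nlinarith
    calc _ ≤ B * (X / y) := b2
      _ ≤ B * (X / Real.sqrt y) := by gcongr
      _ ≤ _ := by gcongr; linarith

lemma pow_le_one_add (y : ℝ) (hy : 0 < y) (m n : ℕ) (h : m ≤ n) : y ^ m ≤ 1 + y ^ n := by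
  have hn : 0 < y ^ n := by positivity
  rcases le_total y 1 with h1 | h1
  · have := pow_le_one₀ (n := m) hy.le h1
    linarith
  · have := pow_le_pow_right₀ h1 h
    linarith

lemma poisI_bound (d : ℝ) (hd : 0 < d) (k : ℕ) :
    ∀ g : SchwartzMap ℝ ℂ, (∀ ξ, |ξ| < d → g ξ = 0) → ∀ e : ℕ,
    ∃ C : ℝ, 0 < C ∧ ∀ x y : ℝ, 0 < y →
      ‖(x : ℂ) ^ k * poisI g e x y‖
        ≤ C * (1 + y ^ k) * (Real.exp (-(2 * π * d * y)) / Real.sqrt y) := by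
  induction k with
  | zero =>
    intro g hg e
    obtain ⟨C, hC, h⟩ := poisI_base g d hd hg e
    refine ⟨C, hC, fun x y hy => ?_⟩
    have hM : 0 ≤ C * (Real.exp (-(2 * π * d * y)) / Real.sqrt y) := by positivity
    have := h x y hy
    simp only [pow_zero, one_mul]
    linarith
  | succ k ih =>
    intro g hg e
    obtain ⟨C1, hC1, h1⟩ := ih g hg (e + 1)
    obtain ⟨C2, hC2, h2⟩ := ih _ (vanish_deriv g d hg) e
    refine ⟨2 * C1 + 2 * C2, by positivity, fun x y hy => ?_⟩
    have st := poisI_step g d hd hg e x y hy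
    specialize h1 x y hy
    specialize h2 x y hy
    set M := Real.exp (-(2 * π * d * y)) / Real.sqrt y
    have hM : 0 ≤ M := by positivity
    have eq : (2 * π * Complex.I) * ((x : ℂ) ^ (k + 1) * poisI g e x y) =
        (2 * π * y) * ((x : ℂ) ^ k * poisI g (e + 1) x y)
          - (x : ℂ) ^ k * poisI (SchwartzMap.derivCLM ℝ ℂ g) e x y := by
      linear_combination (x : ℂ) ^ k * st
    have hn := congrArg norm eq
    have hle := norm_sub_le ((2 * π * y : ℂ) * ((x : ℂ) ^ k * poisI g (e + 1) x y))
      ((x : ℂ) ^ k * poisI (SchwartzMap.derivCLM ℝ ℂ g) e x y)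
    rw [← hn, norm_mul (2 * π * Complex.I : ℂ), norm_mul (2 * π * y : ℂ)] at hle
    have n1 : ‖(2 * π * Complex.I : ℂ)‖ = 2 * π := by
      simp [abs_of_pos Real.pi_pos]
    have n2 : ‖(2 * π * y : ℂ)‖ = 2 * π * y := by
      simp [abs_of_pos Real.pi_pos, abs_of_pos hy]
    rw [n1, n2] at hle
    set Z := ‖(x : ℂ) ^ (k + 1) * poisI g e x y‖
    have hpi := Real.pi_gt_three
    have s1 : 2 * π * Z ≤ 2 * π * y * (C1 * (1 + y ^ k) * M) + C2 * (1 + y ^ k) * M := by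
      refine hle.trans ?_
      gcongr
    have s2 : 2 * π * Z ≤ 2 * π * (y * (C1 * (1 + y ^ k) * M) + C2 * (1 + y ^ k) * M) := by
      have : 0 ≤ C2 * (1 + y ^ k) * M := by positivity
      nlinarith
    have s3 := le_of_mul_le_mul_left s2 (by positivity)
    have q1 := pow_le_one_add y hy 1 (k + 1) (by lia)
    have q2 := pow_le_one_add y hy k (k + 1) (by lia)
    have q3 : 0 < y ^ (k + 1) := by positivity
    have q4 : y * (1 + y ^ k) ≤ 2 * (1 + y ^ (k + 1)) := by
      rw [pow_one] at q1
      have : y * (1 + y ^ k) = y + y ^ (k + 1) := by ring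
      linarith
    have q5 : 1 + y ^ k ≤ 2 * (1 + y ^ (k + 1)) := by linarith
    calc Z ≤ y * (C1 * (1 + y ^ k) * M) + C2 * (1 + y ^ k) * M := s3
      _ = C1 * (y * (1 + y ^ k)) * M + C2 * (1 + y ^ k) * M := by ring
      _ ≤ C1 * (2 * (1 + y ^ (k + 1))) * M + C2 * (2 * (1 + y ^ (k + 1))) * M := by gcongr
      _ = _ := by ring

/-- Localization lemma: if `φ` is Schwartz with `d = dist(supp φ̂, 0) > 0` and `p` is a
polynomial of degree `n`, then `|p(x)(φ * P_y)(x)| ≲ (1+yⁿ) e^{-2πdy}/√y` on `ℂ_+`. -/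
theorem stmt_10 (φ : SchwartzMap ℝ ℂ) (d : ℝ)
    (hd : d = Metric.infDist 0 (Function.support (𝓕 ⇑φ)))
    (hd0 : 0 < d) (p : Polynomial ℂ) (n : ℕ) (hn : p.natDegree = n) :
    ∃ C : ℝ, 0 < C ∧ ∀ x y : ℝ, 0 < y →
      ‖p.eval (x : ℂ) * ∫ t : ℝ, φ t * ((poissonKer y (x - t) : ℝ) : ℂ)‖
        ≤ C * (1 + y ^ n) * Real.exp (-(2 * π * d * y)) / Real.sqrt y := by
  have hv : ∀ ξ, |ξ| < d → (𝓕 φ) ξ = 0 := by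
    intro ξ hξ
    by_contra hne
    have hmem : ξ ∈ Function.support (𝓕 ⇑φ) := hne
    have := Metric.infDist_le_dist_of_mem (x := (0:ℝ)) hmem
    rw [← hd, dist_comm, Real.dist_eq, sub_zero] at this
    linarith
  choose C hC hb using fun k => poisI_bound d hd0 k (𝓕 φ) hv 0
  have hI : ∀ x y : ℝ, 0 < y → ∫ t : ℝ, φ t * ((poissonKer y (x - t) : ℝ) : ℂ)
      = poisI (𝓕 φ) 0 x y := by
    intro x y hy
    rw [pois_rep φ x y hy]
    simp [poisI]
  refine ⟨∑ k ∈ Finset.range (n + 1), ‖p.coeff k‖ * (C k * 2) + 1, ?_, fun x y hy => ?_⟩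
  · have : 0 ≤ ∑ k ∈ Finset.range (n + 1), ‖p.coeff k‖ * (C k * 2) :=
      Finset.sum_nonneg fun k _ => mul_nonneg (norm_nonneg _) (by linarith [hC k])
    linarith
  · rw [hI x y hy, Polynomial.eval_eq_sum_range, hn, Finset.sum_mul, mul_div_assoc]
    set M := Real.exp (-(2 * π * d * y)) / Real.sqrt y
    have hM : 0 ≤ M := by positivity
    have hyn : 0 < 1 + y ^ n := by positivity
    calc _ ≤ ∑ k ∈ Finset.range (n + 1), ‖p.coeff k * (x : ℂ) ^ k * poisI (𝓕 φ) 0 x y‖ :=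
          norm_sum_le _ _
      _ ≤ ∑ k ∈ Finset.range (n + 1), ‖p.coeff k‖ * (C k * 2) * (1 + y ^ n) * M := by
          refine Finset.sum_le_sum fun k hk => ?_
          rw [mul_assoc, norm_mul]
          have hkn : k ≤ n := by simpa [Nat.lt_succ_iff] using hk
          have h1 := pow_le_one_add y hy k n hkn
          have h2 : 0 < y ^ n := by positivity
          have h3 : 1 + y ^ k ≤ 2 * (1 + y ^ n) := by linarith
          have hCk := hC k
          calc _ ≤ ‖p.coeff k‖ * (C k * (1 + y ^ k) * M) := by gcongr; exact hb k x y hy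
            _ ≤ ‖p.coeff k‖ * (C k * (2 * (1 + y ^ n)) * M) := by gcongr
            _ = _ := by ring
      _ = (∑ k ∈ Finset.range (n + 1), ‖p.coeff k‖ * (C k * 2)) * (1 + y ^ n) * M := by
          rw [Finset.sum_mul, Finset.sum_mul]
      _ ≤ _ := by gcongr; linarith
end
end
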